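/- Let 𝔤 be a finite-dimensional real Lie algebra with Killing form K(X,Y) = trace(ad X ∘ ad Y), let α be an inner product on 𝔤, let V ∈ 𝔤 satisfy α(V,V) < 1, and let F(z) = √(α(z,z)) + α(V,z) be the associated Randers norm. If y ∈ 𝔤 is nonzero, K(y,y) ≠ 0, and y is a critical point of the function f(z) = K(z,z)/F(z)² on 𝔤∖{0} (i.e., the derivative of t ↦ f(y+tw) at t = 0 vanishes for every w ∈ 𝔤), then y is a geodesic vector for (α, V). -/

import Mathlib

/-!
The Killing form is `ad`-invariant, so `z ↦ K(z, z)` is stationary at `y` in the directions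
`⁅y, U⁆`. As `K(y, y) ≠ 0`, criticality of `K(z, z) / F(z)²` therefore forces the derivative of
`F` at `y` along `⁅y, U⁆` to vanish, and that derivative is
`α (y + √(α y y) • V) ⁅y, U⁆ / √(α y y)`.
-/

/-- A nonzero `X` is a geodesic vector for the data `(α, V)` of a left-invariant
Randers metric if `α (X + √(α X X) • V) ⁅X, U⁆ = 0` for all `U`. -/
def IsGeodesicVector {L : Type*} [LieRing L] [LieAlgebra ℝ L]
    (α : L →ₗ[ℝ] L →ₗ[ℝ] ℝ) (V X : L) : Prop :=
  X ≠ 0 ∧ ∀ U : L, α (X + Real.sqrt (α X X) • V) ⁅X, U⁆ = 0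

/-- The Killing form K(X,Y) = trace(ad X ∘ ad Y) of a real Lie algebra. -/
noncomputable def killing (L : Type*) [LieRing L] [LieAlgebra ℝ L] (X Y : L) : ℝ :=
  LinearMap.trace ℝ L (LieAlgebra.ad ℝ L X ∘ₗ LieAlgebra.ad ℝ L Y)

section LineDeriv

variable {𝕜 E : Type*} [NontriviallyNormedField 𝕜] [AddCommGroup E] [Module 𝕜 E]

theorem hasLineDerivAt_linearMap {F : Type*} [NormedAddCommGroup F] [NormedSpace 𝕜 F]
    (f : E →ₗ[𝕜] F) (x v : E) : HasLineDerivAt 𝕜 f (f v) x v := by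
  unfold HasLineDerivAt
  simpa only [id_eq, map_add, map_smul, one_smul] using
    ((hasDerivAt_id (0 : 𝕜)).smul_const (f v)).const_add (f x)

theorem hasLineDerivAt_bilin_self (B : LinearMap.BilinForm 𝕜 E) (x v : E) :
    HasLineDerivAt 𝕜 (fun z ↦ B z z) (B x v + B v x) x v := by
  have expansion (t : 𝕜) :
      B (x + t • v) (x + t • v) = B x x + (t * (B x v + B v x) + t ^ 2 * B v v) := by
    simp only [map_add, map_smul, LinearMap.add_apply, LinearMap.smul_apply, smul_eq_mul]
    ring
  have h := (((hasDerivAt_id (0 : 𝕜)).mul_const (B x v + B v x)).fun_add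
    (((hasDerivAt_id (0 : 𝕜)).fun_pow 2).mul_const (B v v))).const_add (B x x)
  unfold HasLineDerivAt
  simp only [expansion]
  simpa using h

theorem hasLineDerivAt_div_sq {f g : E → 𝕜} {f' g' : 𝕜} {x v : E}
    (hf : HasLineDerivAt 𝕜 f f' x v) (hg : HasLineDerivAt 𝕜 g g' x v) (hx : g x ≠ 0) :
    HasLineDerivAt 𝕜 (fun z ↦ f z / g z ^ 2) ((f' * g x - 2 * f x * g') / g x ^ 3) x v := by
  refine (HasDerivAt.fun_div hf (HasDerivAt.fun_pow hg 2) (by simpa using hx)).congr_deriv ?_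
  simp only [zero_smul, add_zero]
  field_simp
  ring

end LineDeriv

section Invariant

variable {𝕜 L : Type*} [NontriviallyNormedField 𝕜] [LieRing L] [LieAlgebra 𝕜 L]

theorem hasLineDerivAt_bilin_self_lie_of_lieInvariant {B : LinearMap.BilinForm 𝕜 L}
    (hB : B.lieInvariant L) (x u : L) : HasLineDerivAt 𝕜 (fun z ↦ B z z) 0 x ⁅x, u⁆ := by
  have right : B x ⁅x, u⁆ = 0 := by simpa using hB x x u
  have left : B ⁅x, u⁆ x = 0 := by simpa using hB x u x
  simpa only [right, left, add_zero] using hasLineDerivAt_bilin_self B x ⁅x, u⁆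

end Invariant

theorem isPosSemidef_of_pos {𝕜 E : Type*} [CommSemiring 𝕜] [PartialOrder 𝕜] [AddCommMonoid E]
    [Module 𝕜 E] {α : LinearMap.BilinForm 𝕜 E} (hsymm : ∀ x y, α x y = α y x)
    (hpos : ∀ x, x ≠ 0 → 0 < α x x) : α.IsPosSemidef where
  eq := hsymm
  nonneg x := by
    obtain rfl | hx := eq_or_ne x 0
    · simp
    · exact (hpos x hx).le

section Randers

variable {E : Type*} [AddCommGroup E] [Module ℝ E] {α : LinearMap.BilinForm ℝ E} {V y : E}

/-- The Randers norm `√α + β`, whose linear part `β = α(V, ·)` is encoded by the vector `V`. -/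
noncomputable def randersNorm (α : LinearMap.BilinForm ℝ E) (V z : E) : ℝ :=
  √(α z z) + α V z

theorem randersNorm_pos (hα : α.IsPosSemidef) (hV : α V V < 1) (hy : 0 < α y y) :
    0 < randersNorm α V y := by
  have cauchy_schwarz : α V y ^ 2 ≤ α V V * α y y :=
    LinearMap.BilinForm.apply_sq_le_of_symm α hα.nonneg ⟨hα.eq⟩ V y
  have abs_lt_sqrt : |α V y| < √(α y y) :=
    Real.lt_sqrt_of_sq_lt <| by
      rw [sq_abs]
      exact cauchy_schwarz.trans_lt (mul_lt_of_lt_one_left hy hV)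
  exact neg_lt_iff_pos_add.mp (neg_lt.mp (abs_lt.mp abs_lt_sqrt).1)

theorem hasLineDerivAt_randersNorm (hα : α.IsSymm) (V : E) (hy : 0 < α y y) (w : E) :
    HasLineDerivAt ℝ (randersNorm α V) (α (y + √(α y y) • V) w / √(α y y)) y w := by
  have sqrt_part : HasLineDerivAt ℝ (fun z ↦ √(α z z)) (α y w / √(α y y)) y w := by
    refine (HasDerivAt.sqrt (hasLineDerivAt_bilin_self α y w)
      (by simpa using hy.ne')).congr_deriv ?_
    simp only [zero_smul, add_zero, hα.eq w y, ← two_mul]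
    exact mul_div_mul_left _ _ two_ne_zero
  have derivative_eq :
      α (y + √(α y y) • V) w / √(α y y) = α y w / √(α y y) + α V w := by
    have := Real.sqrt_pos.mpr hy
    simp only [map_add, map_smul, LinearMap.add_apply, LinearMap.smul_apply, smul_eq_mul]
    field_simp
  rw [derivative_eq]
  exact HasDerivAt.fun_add sqrt_part (hasLineDerivAt_linearMap (α V) y w)

end Randers

theorem geodesic_vector_of_critical_point_general {L : Type*} [LieRing L] [LieAlgebra ℝ L]
    {α B : LinearMap.BilinForm ℝ L} (hα : α.IsPosSemidef) (hB : B.lieInvariant L)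
    {V y : L} (hV : α V V < 1) (hy : 0 < α y y) (hBy : B y y ≠ 0)
    (hcrit : ∀ U : L, lineDeriv ℝ (fun z ↦ B z z / randersNorm α V z ^ 2) y ⁅y, U⁆ = 0) :
    IsGeodesicVector α V y := by
  refine ⟨by rintro rfl; simp at hy, fun U ↦ ?_⟩
  have hF : randersNorm α V y ≠ 0 := (randersNorm_pos hα hV hy).ne'
  have quotient_deriv := hasLineDerivAt_div_sq
    (hasLineDerivAt_bilin_self_lie_of_lieInvariant hB y U)
    (hasLineDerivAt_randersNorm hα.isSymm V hy ⁅y, U⁆) hF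
  have randersNorm_stationary : α (y + √(α y y) • V) ⁅y, U⁆ / √(α y y) = 0 := by
    simpa [hF, hBy] using quotient_deriv.lineDeriv.symm.trans (hcrit U)
  exact (div_eq_zero_iff.mp randersNorm_stationary).resolve_right (Real.sqrt_pos.mpr hy).ne'

/-- if y is nonzero, K(y,y) ≠ 0 and y is a critical point of
f(z) = K(z,z)/F(z)² on 𝔤∖{0} (all directional derivatives at y vanish), where
F is the Randers norm of (α, V), then y is a geodesic vector for (α, V). -/
theorem geodesic_vector_of_critical_point
    (L : Type*) [LieRing L] [LieAlgebra ℝ L] [FiniteDimensional ℝ L]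
    (α : L →ₗ[ℝ] L →ₗ[ℝ] ℝ)
    (hsymm : ∀ x y, α x y = α y x)
    (hpos : ∀ x, x ≠ 0 → 0 < α x x)
    (V : L) (hV : α V V < 1)
    (F : L → ℝ) (hF : ∀ z, F z = Real.sqrt (α z z) + α V z)
    (y : L) (hy : y ≠ 0) (hKy : killing L y y ≠ 0)
    (hcrit : ∀ w : L,
      deriv (fun t : ℝ => killing L (y + t • w) (y + t • w) / (F (y + t • w)) ^ 2) 0 = 0) :
    IsGeodesicVector α V y := by
  obtain rfl : F = randersNorm α V := funext hF
  exact geodesic_vector_of_critical_point_general (B := killingForm ℝ L)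
    (isPosSemidef_of_pos hsymm hpos) (LieModule.traceForm_lieInvariant ℝ L L)
    hV (hpos y hy) hKy fun U ↦ hcrit ⁅y, U⁆
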